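/- Let G be a finite group. There exists a family (p_U), indexed by the conjugacy classes of subgroups U ≤ G, where p_U is a polynomial with integer coefficients in the variables a_V, b_V indexed by the conjugacy classes of subgroups V ≤ G with U subconjugate to V, such that for every commutative ring R, every subgroup H ≤ G, and all x = (x_V)'_{V ≤ G}, y = (y_V)'_{V ≤ G} ∈ W_G(R): φ_H(x) · φ_H(y) = φ_H((p_U(x_V, y_V | U ⪯ V ≤ G))'_{U ≤ G}). -/

import Mathlib

open MulAction Pointwise
open scoped Classical

/-- The set of conjugacy classes of subgroups of `G`: the quotient of the set of
subgroups of `G` by the conjugation action of `G`. -/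
abbrev SubgroupConjClasses (G : Type*) [Group G] :=
  MulAction.orbitRel.Quotient (ConjAct G) (Subgroup G)

/-- `U` is subconjugate to `V`: `U ≤ gVg⁻¹` for some `g ∈ G`. -/
def Subconj {G : Type*} [Group G] (U V : Subgroup G) : Prop :=
  ∃ g : ConjAct G, U ≤ g • V

/-- The ghost map `φ_U : W_G(R) → R`,
`φ_U(x) = Σ'_{U ⪯ V ≤ G} |(G/V)^U| · x_V^{(V:U)}`, with exactly one summand for
each conjugacy class of subgroups `V` of `G` to which `U` is subconjugate. -/
noncomputable def ghost {G : Type*} [Group G] [Fintype G] {R : Type*} [CommRing R]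
    (U : Subgroup G) (x : SubgroupConjClasses G → R) : R :=
  ∑ᶠ C : SubgroupConjClasses G,
    if Subconj U (Quotient.out C) then
      (Nat.card (MulAction.fixedPoints U (G ⧸ (Quotient.out C : Subgroup G))) : R) *
        x C ^ (Nat.card (Quotient.out C : Subgroup G) / Nat.card U)
    else 0


set_option linter.unusedSectionVars false

section WittAux

variable {G : Type*} [Group G] [Fintype G] {R : Type*} [CommRing R]

noncomputable def tau (V : Subgroup G) (a : R) : Subgroup G → R := fun U =>
  (Nat.card (MulAction.fixedPoints U (G ⧸ V)) : R) * a ^ (Nat.card V / Nat.card U)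

theorem mem_fixed_iff {S : Type*} [MulAction G S] (U : Subgroup G) (s : S) :
    s ∈ MulAction.fixedPoints U S ↔ U ≤ stabilizer G s := by
  constructor
  · intro h g hg
    exact h ⟨g, hg⟩
  · intro h g
    exact h g.2

theorem card_stab_of_rel {S : Type*} [MulAction G S] {s t : S}
    (h : MulAction.orbitRel G S s t) :
    Nat.card (stabilizer G s) = Nat.card (stabilizer G t) :=
  Nat.card_congr (MulAction.stabilizerEquivStabilizerOfOrbitRel h).toEquiv

theorem card_stab_quot (V : Subgroup G) (s : G ⧸ V) :
    Nat.card (stabilizer G s) = Nat.card V := by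
  have h : MulAction.orbitRel G (G ⧸ V) s ((1 : G) : G ⧸ V) := by
    rw [MulAction.orbitRel_apply]
    exact MulAction.exists_smul_eq G _ _
  rw [card_stab_of_rel h, MulAction.stabilizer_quotient]

theorem card_fixed_orbit {S : Type*} [MulAction G S] [Fintype S] (U : Subgroup G) (s₀ : S) :
    (Finset.univ.filter (fun s : S => MulAction.orbitRel G S s s₀ ∧ U ≤ stabilizer G s)).card
      = Nat.card (MulAction.fixedPoints U (G ⧸ stabilizer G s₀)) := by
  rw [← Fintype.card_subtype, ← Nat.card_eq_fintype_card]
  symm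
  refine Nat.card_congr (Equiv.ofBijective (fun q => ⟨MulAction.ofQuotientStabilizer G s₀ q.1, ?_, ?_⟩) ⟨?_, ?_⟩)
  · exact MulAction.ofQuotientStabilizer_mem_orbit G s₀ q.1
  · intro g hg
    have := q.2 ⟨g, hg⟩
    rw [MulAction.mem_stabilizer_iff, ← MulAction.ofQuotientStabilizer_smul]
    congr 1
  · intro q q' h
    exact Subtype.ext (MulAction.injective_ofQuotientStabilizer G s₀ (congrArg Subtype.val h))
  · rintro ⟨s, ⟨g, rfl⟩, hs⟩
    refine ⟨⟨(g : G ⧸ stabilizer G s₀), ?_⟩, Subtype.ext (by simp)⟩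
    intro u
    apply MulAction.injective_ofQuotientStabilizer G s₀
    have h1 := hs u.2
    have h2 : (u • (g : G ⧸ stabilizer G s₀)) = (u : G) • (g : G ⧸ stabilizer G s₀) := rfl
    rw [h2, MulAction.ofQuotientStabilizer_smul]
    simpa using h1

theorem tau_eq_sum (V : Subgroup G) (a : R) (U : Subgroup G) :
    tau V a U = ∑ s : G ⧸ V, if U ≤ stabilizer G s then a ^ (Nat.card V / Nat.card U) else 0 := by
  rw [← Finset.sum_filter, Finset.sum_const, nsmul_eq_mul, tau]
  congr 2
  rw [← Fintype.card_subtype, ← Nat.card_eq_fintype_card]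
  exact Nat.card_congr (Equiv.subtypeEquivRight (mem_fixed_iff U))

theorem tau_zero (V : Subgroup G) : tau V (0 : R) = 0 := by
  funext U
  rw [tau_eq_sum]
  refine Finset.sum_eq_zero fun s _ => ?_
  split_ifs with h
  · apply zero_pow
    have h1 := Subgroup.card_le_of_le h
    rw [card_stab_quot] at h1
    have := Nat.div_pos h1 Nat.card_pos
    omega
  · rfl

/-- decomposition of a weighted `G`-set into orbits -/
theorem wsum_mem {S : Type*} [MulAction G S] [Fintype S] (P : S → Prop) (w : S → R)
    (hP : ∀ (g : G) s, P s → P (g • s)) (hw : ∀ (g : G) s, w (g • s) = w s) :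
    (fun U : Subgroup G => ∑ s : S, if U ≤ stabilizer G s ∧ P s then
      w s ^ (Nat.card (stabilizer G s) / Nat.card U) else 0) ∈
    AddSubgroup.closure {r | ∃ s, P s ∧ r = tau (stabilizer G s) (w s)} := by
  have key : (fun U : Subgroup G => ∑ s : S, if U ≤ stabilizer G s ∧ P s then
      w s ^ (Nat.card (stabilizer G s) / Nat.card U) else 0) =
      ∑ ω : MulAction.orbitRel.Quotient G S,
        if P ω.out then tau (stabilizer G ω.out) (w ω.out) else 0 := by
    funext U
    rw [Finset.sum_apply, ← Finset.sum_fiberwise (s := Finset.univ)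
      (g := fun s : S => (Quotient.mk _ s : MulAction.orbitRel.Quotient G S))]
    refine Finset.sum_congr rfl fun ω _ => ?_
    have hrel : ∀ s : S, (Quotient.mk _ s : MulAction.orbitRel.Quotient G S) = ω ↔
        MulAction.orbitRel G S s ω.out := by
      intro s
      rw [← Quotient.eq, Quotient.out_eq]
    have hPr : ∀ s, MulAction.orbitRel G S s ω.out → (P s ↔ P ω.out) := by
      rintro s ⟨g, hg⟩
      constructor
      · intro h
        have := hP g⁻¹ s h
        rwa [← hg, inv_smul_smul] at this
      · intro h
        rw [← hg]
        exact hP g _ h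
    have hwr : ∀ s, MulAction.orbitRel G S s ω.out → w s = w ω.out := by
      rintro s ⟨g, hg⟩
      rw [← hg]; exact hw g _
    by_cases hp : P ω.out
    · rw [if_pos hp, tau, ← card_fixed_orbit, ← nsmul_eq_mul, ← Finset.sum_const,
        ← Finset.sum_filter, Finset.filter_filter]
      refine Finset.sum_congr ?_ ?_
      · ext s
        simp only [Finset.mem_filter, Finset.mem_univ, true_and, hrel]
        constructor
        · rintro ⟨h1, h2, h3⟩; exact ⟨h1, h2⟩
        · rintro ⟨h1, h2⟩; exact ⟨h1, h2, (hPr s h1).2 hp⟩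
      · intro s hs
        simp only [Finset.mem_filter, Finset.mem_univ, true_and, hrel] at hs
        rw [hwr s hs.1, card_stab_of_rel hs.1]
    · rw [if_neg hp]
      refine Finset.sum_eq_zero fun s hs => ?_
      simp only [Finset.mem_filter, Finset.mem_univ, true_and, hrel] at hs
      rw [if_neg]
      rintro ⟨_, h⟩
      exact hp ((hPr s hs).1 h)
  rw [key]
  refine AddSubgroup.sum_mem _ fun ω _ => ?_
  split_ifs with h
  · exact AddSubgroup.subset_closure ⟨_, h, rfl⟩
  · exact AddSubgroup.zero_mem _

theorem tau_conj (V : Subgroup G) (s : G ⧸ V) (a : R) : tau (stabilizer G s) a = tau V a := by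
  funext U
  rw [tau_eq_sum V, ← Finset.sum_filter, Finset.sum_const, nsmul_eq_mul, tau, card_stab_quot,
    ← card_fixed_orbit]
  congr 3
  ext t
  simp only [Finset.mem_filter, Finset.mem_univ, true_and, and_iff_right_iff_imp]
  intro _
  rw [MulAction.orbitRel_apply]
  exact MulAction.exists_smul_eq G _ _

theorem tau_conjAct (V : Subgroup G) (g : ConjAct G) (a : R) : tau (g • V) a = tau V a := by
  rw [← tau_conj V ((ConjAct.ofConjAct g : G) : G ⧸ V)]
  congr 1
  ext x
  rw [MulAction.mem_stabilizer_iff, Subgroup.mem_pointwise_smul_iff_inv_smul_mem]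
  rw [ConjAct.smul_def]
  have : x • ((ConjAct.ofConjAct g : G) : G ⧸ V) = ((x * ConjAct.ofConjAct g : G) : G ⧸ V) := rfl
  rw [this, eq_comm, QuotientGroup.eq]
  simp [mul_assoc]

def LL (R : Type*) [CommRing R] (G : Type*) [Group G] [Fintype G] (n : ℕ) :
    AddSubgroup (Subgroup G → R) :=
  AddSubgroup.closure {r | ∃ (W : Subgroup G) (c : R), Nat.card W < n ∧ r = tau W c}

theorem wsum_mem_LL {S : Type*} [MulAction G S] [Fintype S] (P : S → Prop) (w : S → R)
    (hP : ∀ (g : G) s, P s → P (g • s)) (hw : ∀ (g : G) s, w (g • s) = w s) (n : ℕ)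
    (hn : ∀ s, P s → Nat.card (stabilizer G s) < n) :
    (fun U : Subgroup G => ∑ s : S, if U ≤ stabilizer G s ∧ P s then
      w s ^ (Nat.card (stabilizer G s) / Nat.card U) else 0) ∈ LL R G n := by
  refine AddSubgroup.closure_mono ?_ (wsum_mem P w hP hw)
  rintro r ⟨s, hs, rfl⟩
  exact ⟨_, _, hn s hs, rfl⟩

theorem stab_prod_le {S T : Type*} [MulAction G S] [MulAction G T] (s : S × T) :
    stabilizer G s = stabilizer G s.1 ⊓ stabilizer G s.2 := by
  ext g
  simp [MulAction.mem_stabilizer_iff, Prod.ext_iff]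

theorem card_stab_smul {S : Type*} [MulAction G S] (g : G) (s : S) :
    Nat.card (stabilizer G (g • s)) = Nat.card (stabilizer G s) :=
  card_stab_of_rel ⟨g, rfl⟩

theorem div_mul_div' {a b c : ℕ} (h1 : c ∣ b) (h2 : b ∣ a) (hc : 0 < c) (hb : 0 < b) :
    a / b * (b / c) = a / c := by
  obtain ⟨k, rfl⟩ := h1
  obtain ⟨l, rfl⟩ := h2
  rw [Nat.mul_div_cancel_left _ hb, Nat.mul_div_cancel_left _ hc, mul_assoc,
    Nat.mul_div_cancel_left _ hc, mul_comm]

theorem tau_mul_mem (V W : Subgroup G) (a b : R) :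
    tau V a * tau W b ∈ LL R G (Nat.card G + 1) := by
  have h := wsum_mem_LL (G := G) (S := (G ⧸ V) × (G ⧸ W)) (fun _ => True)
    (fun s => a ^ (Nat.card V / Nat.card (stabilizer G s)) *
      b ^ (Nat.card W / Nat.card (stabilizer G s))) (fun _ _ h => h)
    (fun g s => by simp only [card_stab_smul])
    (Nat.card G + 1) (fun _ _ => Nat.lt_succ_of_le (Subgroup.card_le_card_group _))
  convert h using 1
  · funext U
    rw [Pi.mul_apply, tau_eq_sum, tau_eq_sum, Finset.sum_mul_sum, ← Finset.univ_product_univ,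
      Finset.sum_product]
    refine Finset.sum_congr rfl fun s _ => Finset.sum_congr rfl fun t _ => ?_
    have hst : stabilizer G (s, t) = stabilizer G s ⊓ stabilizer G t := stab_prod_le (G := G) (s, t)
    have d1 : Nat.card (stabilizer G (s, t)) ∣ Nat.card V := by
      rw [← card_stab_quot V s]
      exact Subgroup.card_dvd_of_le (hst ▸ inf_le_left)
    have d2 : Nat.card (stabilizer G (s, t)) ∣ Nat.card W := by
      rw [← card_stab_quot W t]
      exact Subgroup.card_dvd_of_le (hst ▸ inf_le_right)
    by_cases hU : U ≤ stabilizer G (s, t)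
    · have d3 := Subgroup.card_dvd_of_le hU
      rw [if_pos (c := U ≤ stabilizer G (s, t) ∧ True) ⟨hU, trivial⟩, mul_pow, ← pow_mul, ← pow_mul,
        div_mul_div' d3 d1 Nat.card_pos Nat.card_pos,
        div_mul_div' d3 d2 Nat.card_pos Nat.card_pos]
      rw [hst, le_inf_iff] at hU
      rw [if_pos hU.1, if_pos hU.2]
    · rw [if_neg (c := U ≤ stabilizer G (s, t) ∧ True) (fun h => hU h.1)]
      rw [hst, le_inf_iff, not_and_or] at hU
      rcases hU with h | h <;> rw [if_neg h] <;> simp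

theorem LL_mul {r r' : Subgroup G → R} (h : r ∈ LL R G (Nat.card G + 1))
    (h' : r' ∈ LL R G (Nat.card G + 1)) : r * r' ∈ LL R G (Nat.card G + 1) := by
  unfold LL at h h'
  induction h using AddSubgroup.closure_induction with
  | mem x hx =>
    obtain ⟨V, a, -, rfl⟩ := hx
    induction h' using AddSubgroup.closure_induction with
    | mem y hy =>
      obtain ⟨W, b, -, rfl⟩ := hy
      exact tau_mul_mem V W a b
    | zero => rw [mul_zero]; exact AddSubgroup.zero_mem _
    | add y z _ _ hy hz => rw [mul_add]; exact AddSubgroup.add_mem _ hy hz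
    | neg y _ hy => rw [mul_neg]; exact AddSubgroup.neg_mem _ hy
  | zero => rw [zero_mul]; exact AddSubgroup.zero_mem _
  | add y z _ _ hy hz => rw [add_mul]; exact AddSubgroup.add_mem _ hy hz
  | neg y _ hy => rw [neg_mul]; exact AddSubgroup.neg_mem _ hy

noncomputable def projU (U : Subgroup G) (g : G) : G ⧸ U := ((g⁻¹ : G) : G ⧸ U)

theorem projU_eq (U : Subgroup G) (g h : G) : projU U g = projU U h ↔ g * h⁻¹ ∈ U := by
  rw [projU, projU, QuotientGroup.eq, inv_inv]

theorem projU_surj (U : Subgroup G) : Function.Surjective (projU U) := by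
  intro q
  obtain ⟨g, rfl⟩ := QuotientGroup.mk_surjective q
  exact ⟨g⁻¹, by simp [projU]⟩

noncomputable def liftU (U : Subgroup G) (A : Finset (G ⧸ U)) : Finset G :=
  Finset.univ.filter (fun g => projU U g ∈ A)

theorem mem_liftU (U : Subgroup G) (A : Finset (G ⧸ U)) (g : G) :
    g ∈ liftU U A ↔ projU U g ∈ A := by simp [liftU]

theorem image_liftU (U : Subgroup G) (A : Finset (G ⧸ U)) : (liftU U A).image (projU U) = A := by
  ext q
  simp only [Finset.mem_image, mem_liftU]
  constructor
  · rintro ⟨g, h, rfl⟩; exact h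
  · intro h
    obtain ⟨g, rfl⟩ := projU_surj U q
    exact ⟨g, h, rfl⟩

theorem liftU_image (U : Subgroup G) (T : Finset G) (hT : U ≤ stabilizer G T) :
    liftU U (T.image (projU U)) = T := by
  ext g
  simp only [Finset.mem_image, mem_liftU]
  constructor
  · rintro ⟨h, hh, e⟩
    rw [eq_comm, projU_eq] at e
    have h1 := hT e
    rw [MulAction.mem_stabilizer_iff] at h1
    rw [← h1, Finset.mem_smul_finset]
    exact ⟨h, hh, by simp⟩
  · intro h
    exact ⟨g, h, rfl⟩

theorem liftU_stab (U : Subgroup G) (A : Finset (G ⧸ U)) : U ≤ stabilizer G (liftU U A) := by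
  intro u hu
  rw [MulAction.mem_stabilizer_iff]
  ext g
  rw [← Finset.inv_smul_mem_iff, mem_liftU, mem_liftU]
  have : projU U (u⁻¹ • g) = projU U g := by
    rw [projU_eq]; simpa using hu
  rw [this]

theorem card_liftU (U : Subgroup G) (A : Finset (G ⧸ U)) :
    (liftU U A).card = Nat.card U * A.card := by
  have h := QuotientGroup.card_preimage_mk U (A : Set (G ⧸ U))
  rw [Nat.card_coe_set_eq, Nat.card_coe_set_eq, Set.ncard_coe_finset] at h
  rw [← h, ← Set.ncard_coe_finset]
  have : ((liftU U A : Finset G) : Set G) =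
      (Equiv.inv G) '' ((QuotientGroup.mk : G → G ⧸ U) ⁻¹' (A : Set (G ⧸ U))) := by
    ext g
    rw [Equiv.image_eq_preimage_symm]
    simp [mem_liftU, projU]
  rw [this, Set.ncard_image_of_injective _ (Equiv.injective _)]

theorem card_dvd_of_stab (U : Subgroup G) (T : Finset G) (hT : U ≤ stabilizer G T) :
    Nat.card U ∣ T.card := by
  rw [← liftU_image U T hT, card_liftU]
  exact dvd_mul_right _ _

theorem subset_sum (U : Subgroup G) (F : Finset G) (hF : U ≤ stabilizer G F) (a b : R) :
    ∑ T ∈ Finset.univ.filter (fun T : Finset G => U ≤ stabilizer G T ∧ T ⊆ F),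
      a ^ (T.card / Nat.card U) * b ^ ((F.card - T.card) / Nat.card U) =
    (a + b) ^ (F.card / Nat.card U) := by
  have hU : 0 < Nat.card U := Nat.card_pos
  have hFc : F.card = Nat.card U * (F.image (projU U)).card := by
    rw [← card_liftU, liftU_image U F hF]
  rw [hFc, Nat.mul_div_cancel_left _ hU, ← Finset.sum_pow_mul_eq_add_pow]
  symm
  refine Finset.sum_bij' (fun A _ => liftU U A) (fun T _ => T.image (projU U)) ?_ ?_ ?_ ?_ ?_
  · intro A hA
    rw [Finset.mem_powerset] at hA
    simp only [Finset.mem_filter, Finset.mem_univ, true_and]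
    refine ⟨liftU_stab U A, ?_⟩
    rw [← liftU_image U F hF]
    intro g hg
    rw [mem_liftU] at hg ⊢
    exact hA hg
  · intro T hT
    simp only [Finset.mem_filter, Finset.mem_univ, true_and] at hT
    rw [Finset.mem_powerset]
    exact Finset.image_subset_image hT.2
  · intro A _
    exact image_liftU U A
  · intro T hT
    simp only [Finset.mem_filter, Finset.mem_univ, true_and] at hT
    exact liftU_image U T hT.1
  · intro A _
    rw [card_liftU, ← Nat.mul_sub, Nat.mul_div_cancel_left _ hU, Nat.mul_div_cancel_left _ hU]

noncomputable def fib (V : Subgroup G) (s : G ⧸ V) : Finset G :=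
  Finset.univ.filter (fun g : G => (g : G ⧸ V) = s)

theorem mem_fib (V : Subgroup G) (s : G ⧸ V) (g : G) : g ∈ fib V s ↔ (g : G ⧸ V) = s := by
  simp [fib]

theorem smul_fib (V : Subgroup G) (s : G ⧸ V) (g : G) : g • fib V s = fib V (g • s) := by
  ext h
  rw [← Finset.inv_smul_mem_iff, mem_fib, mem_fib, ← inv_smul_eq_iff]
  rfl

theorem card_fib (V : Subgroup G) (s : G ⧸ V) : (fib V s).card = Nat.card V := by
  have h := QuotientGroup.card_preimage_mk V ({s} : Set (G ⧸ V))
  rw [Nat.card_coe_set_eq, Nat.card_coe_set_eq, Set.ncard_singleton, mul_one] at h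
  rw [← h, ← Set.ncard_coe_finset]
  congr 1
  ext g
  simp [mem_fib]

theorem stab_fib (V : Subgroup G) (s : G ⧸ V) : stabilizer G s ≤ stabilizer G (fib V s) := by
  intro g hg
  rw [MulAction.mem_stabilizer_iff] at hg ⊢
  rw [smul_fib, hg]

theorem tau_add_mem (V : Subgroup G) (a b : R) :
    tau V (a + b) - tau V a - tau V b ∈ LL R G (Nat.card V) := by
  have hst : ∀ (s : G ⧸ V) (T : Finset G),
    stabilizer G (s, T) = stabilizer G s ⊓ stabilizer G T := fun s T => stab_prod_le (G := G) (s, T)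
  have h := wsum_mem_LL (G := G) (S := (G ⧸ V) × Finset G)
    (fun s => s.2 ⊆ fib V s.1 ∧ s.2 ≠ ∅ ∧ s.2 ≠ fib V s.1)
    (fun s => a ^ (s.2.card / Nat.card (stabilizer G s)) *
      b ^ ((Nat.card V - s.2.card) / Nat.card (stabilizer G s)))
    (by
      rintro g ⟨s, T⟩ ⟨h1, h2, h3⟩
      simp only [Prod.smul_mk] at *
      rw [← smul_fib]
      refine ⟨Finset.smul_finset_subset_smul_finset h1, ?_, ?_⟩
      · rw [Ne, Finset.smul_finset_eq_empty]; exact h2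
      · rw [Ne, smul_left_cancel_iff]; exact h3)
    (fun g s => by simp only [card_stab_smul, Prod.smul_snd, Finset.card_smul_finset])
    (Nat.card V) (by
    rintro ⟨s, T⟩ ⟨h1, h2, h3⟩
    simp only at h1 h2 h3
    have d2 : Nat.card (stabilizer G (s, T)) ∣ T.card :=
      card_dvd_of_stab _ _ (hst s T ▸ inf_le_right)
    have l1 := Nat.le_of_dvd (Finset.card_pos.2 (Finset.nonempty_iff_ne_empty.2 h2)) d2
    have l2 := Finset.card_lt_card (Finset.ssubset_iff_subset_ne.2 ⟨h1, h3⟩)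
    rw [card_fib] at l2
    omega)
  convert h using 1
  · funext U
    rw [Pi.sub_apply, Pi.sub_apply, tau_eq_sum, tau_eq_sum, tau_eq_sum, ← Finset.sum_sub_distrib,
      ← Finset.sum_sub_distrib, ← Finset.univ_product_univ, Finset.sum_product]
    refine Finset.sum_congr rfl fun s _ => ?_
    by_cases hU : U ≤ stabilizer G s
    · rw [if_pos hU, if_pos hU, if_pos hU]
      have hF := hU.trans (stab_fib V s)
      have key := subset_sum U (fib V s) hF a b
      rw [card_fib] at key
      rw [← key]
      have hne : (fib V s) ≠ ∅ := by
        intro h0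
        have := card_fib V s
        rw [h0, Finset.card_empty] at this
        have h1 : 0 < Nat.card V := Nat.card_pos
        omega
      have m1 : fib V s ∈ Finset.univ.filter
          (fun T : Finset G => U ≤ stabilizer G T ∧ T ⊆ fib V s) := by
        simp [hF]
      rw [← Finset.add_sum_erase _ _ m1]
      have m2 : ∅ ∈ (Finset.univ.filter
          (fun T : Finset G => U ≤ stabilizer G T ∧ T ⊆ fib V s)).erase (fib V s) := by
        simp only [Finset.mem_erase, Finset.mem_filter, Finset.mem_univ, true_and]
        refine ⟨hne.symm, ?_, Finset.empty_subset _⟩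
        intro g _
        simp [MulAction.mem_stabilizer_iff]
      rw [← Finset.add_sum_erase _ _ m2, card_fib]
      simp only [Nat.sub_self, Nat.zero_div, pow_zero, mul_one, Finset.card_empty, one_mul,
        Nat.sub_zero, add_sub_cancel_left]
      trans ∑ T ∈ Finset.univ.filter (fun T : Finset G => U ≤ stabilizer G (s, T) ∧
        (T ⊆ fib V s ∧ T ≠ ∅ ∧ T ≠ fib V s)),
          (a ^ (T.card / Nat.card (stabilizer G (s, T))) *
            b ^ ((Nat.card V - T.card) / Nat.card (stabilizer G (s, T)))) ^
            (Nat.card (stabilizer G (s, T)) / Nat.card U)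
      swap
      · rw [Finset.sum_filter]
      refine Finset.sum_congr ?_ ?_
      · ext T
        simp only [Finset.mem_erase, Finset.mem_filter, Finset.mem_univ, true_and, hst, le_inf_iff]
        tauto
      · intro T hT
        simp only [Finset.mem_erase, Finset.mem_filter, Finset.mem_univ, true_and] at hT
        have hUT : U ≤ stabilizer G (s, T) := hT.1
        have d1 := Subgroup.card_dvd_of_le hUT
        have d2 : Nat.card (stabilizer G (s, T)) ∣ T.card :=
          card_dvd_of_stab _ _ (hst s T ▸ inf_le_right)
        have d3 : Nat.card (stabilizer G (s, T)) ∣ Nat.card V := by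
          rw [← card_stab_quot V s]
          exact Subgroup.card_dvd_of_le (hst s T ▸ inf_le_left)
        rw [mul_pow, ← pow_mul, ← pow_mul, div_mul_div' d1 d2 Nat.card_pos Nat.card_pos,
          div_mul_div' d1 (Nat.dvd_sub d3 d2) Nat.card_pos Nat.card_pos]
    · rw [if_neg hU, if_neg hU, if_neg hU, sub_zero, sub_zero]
      symm
      refine Finset.sum_eq_zero fun T _ => if_neg ?_
      rintro ⟨h1, -⟩
      rw [hst] at h1
      exact hU (h1.trans inf_le_left)

theorem tau_mem_LL (V : Subgroup G) (a : R) {n : ℕ} (h : Nat.card V < n) :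
    tau V a ∈ LL R G n := AddSubgroup.subset_closure ⟨V, a, h, rfl⟩

theorem LL_mono {m n : ℕ} (h : m ≤ n) : LL R G m ≤ LL R G n := by
  apply AddSubgroup.closure_mono
  rintro r ⟨W, c, hW, rfl⟩
  exact ⟨W, c, by omega, rfl⟩

noncomputable abbrev crd (C : SubgroupConjClasses G) : ℕ := Nat.card (Quotient.out C : Subgroup G)

theorem tau_out (W : Subgroup G) (c : R) :
    tau (Quotient.out (Quotient.mk _ W : SubgroupConjClasses G) : Subgroup G) c = tau W c ∧
    crd (Quotient.mk _ W : SubgroupConjClasses G) = Nat.card W := by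
  have h : MulAction.orbitRel (ConjAct G) (Subgroup G)
    (Quotient.out (Quotient.mk _ W : SubgroupConjClasses G)) W := Quotient.mk_out W
  obtain ⟨g, hg⟩ := h
  have hg' : g • W = Quotient.out (Quotient.mk _ W : SubgroupConjClasses G) := hg
  refine ⟨?_, ?_⟩
  · rw [← hg', tau_conjAct]
  · rw [crd, ← hg']
    exact (Nat.card_congr (Subgroup.equivSMul g W).toEquiv).symm

theorem LL_step (n : ℕ) (r : Subgroup G → R) (hr : r ∈ LL R G (n + 1)) :
    ∃ x : SubgroupConjClasses G → R, (∀ C, crd C ≠ n → x C = 0) ∧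
      r - ∑ C, tau (Quotient.out C) (x C) ∈ LL R G n := by
  unfold LL at hr
  have madd : ∀ (C : SubgroupConjClasses G) (x y : R), (crd C ≠ n → x = 0) →
      tau (Quotient.out C) (x + y) - tau (Quotient.out C) x - tau (Quotient.out C) y ∈ LL R G n := by
    intro C x y hx
    by_cases hC : crd C = n
    · rw [← hC]; exact tau_add_mem _ _ _
    · rw [hx hC, zero_add, tau_zero, sub_zero, sub_self]
      exact AddSubgroup.zero_mem _
  induction hr using AddSubgroup.closure_induction with
  | mem r h =>
    obtain ⟨W, c, hW, rfl⟩ := h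
    by_cases hn : Nat.card W = n
    · obtain ⟨h1, h2⟩ := tau_out W c
      refine ⟨Pi.single (Quotient.mk _ W) c, ?_, ?_⟩
      · intro C hC
        apply Pi.single_eq_of_ne
        rintro rfl
        exact hC (h2.trans hn)
      · rw [Finset.sum_eq_single (Quotient.mk _ W : SubgroupConjClasses G)]
        · rw [Pi.single_eq_same, h1, sub_self]
          exact AddSubgroup.zero_mem _
        · intro C _ hC
          rw [Pi.single_eq_of_ne hC, tau_zero]
        · simp
    · refine ⟨0, fun _ _ => rfl, ?_⟩
      simp only [Pi.zero_apply, tau_zero, Finset.sum_const_zero, sub_zero]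
      exact tau_mem_LL _ _ (by omega)
  | zero =>
    refine ⟨0, fun _ _ => rfl, ?_⟩
    simp only [Pi.zero_apply, tau_zero, Finset.sum_const_zero, sub_zero]
    exact AddSubgroup.zero_mem _
  | add r r' _ _ h h' =>
    obtain ⟨x, hx, hx'⟩ := h
    obtain ⟨y, hy, hy'⟩ := h'
    refine ⟨x + y, fun C hC => by simp [hx C hC, hy C hC], ?_⟩
    have h3 : ∑ C, (tau (Quotient.out C) (x C + y C) - tau (Quotient.out C) (x C)
      - tau (Quotient.out C) (y C)) ∈ LL R G n :=
      AddSubgroup.sum_mem _ fun C _ => madd C _ _ (hx C)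
    rw [Finset.sum_sub_distrib, Finset.sum_sub_distrib] at h3
    have := AddSubgroup.sub_mem _ (AddSubgroup.add_mem _ hx' hy') h3
    simp only [Pi.add_apply]
    convert this using 1
    abel
  | neg r _ h =>
    obtain ⟨x, hx, hx'⟩ := h
    refine ⟨-x, fun C hC => by simp [hx C hC], ?_⟩
    have h3 : ∑ C, (tau (Quotient.out C) (x C + - x C) - tau (Quotient.out C) (x C)
      - tau (Quotient.out C) (- x C)) ∈ LL R G n :=
      AddSubgroup.sum_mem _ fun C _ => madd C _ _ (hx C)
    simp only [add_neg_cancel, tau_zero, zero_sub] at h3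
    rw [Finset.sum_sub_distrib, Finset.sum_neg_distrib] at h3
    have := AddSubgroup.sub_mem _ h3 hx'
    simp only [Pi.neg_apply]
    convert this using 1
    abel

theorem LL_exists (n : ℕ) : ∀ (r : Subgroup G → R), r ∈ LL R G n →
    ∃ x : SubgroupConjClasses G → R, (∀ C, n ≤ crd C → x C = 0) ∧
      r = ∑ C, tau (Quotient.out C) (x C) := by
  induction n with
  | zero =>
    intro r hr
    refine ⟨0, fun _ _ => rfl, ?_⟩
    simp only [Pi.zero_apply, tau_zero, Finset.sum_const_zero]
    simpa [LL] using hr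
  | succ n ih =>
    intro r hr
    obtain ⟨x, hx, hx'⟩ := LL_step n r hr
    obtain ⟨y, hy, hy'⟩ := ih _ hx'
    refine ⟨x + y, fun C hC => by simp [hx C (by omega), hy C (by omega)], ?_⟩
    rw [sub_eq_iff_eq_add, ← Finset.sum_add_distrib] at hy'
    rw [hy']
    refine Finset.sum_congr rfl fun C _ => ?_
    by_cases hC : crd C = n
    · rw [Pi.add_apply, hy C hC.ge, tau_zero, zero_add, add_zero]
    · rw [Pi.add_apply, hx C hC, tau_zero, zero_add, add_zero]

theorem subconj_of_fixed {U V : Subgroup G}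
    (h : Nat.card (MulAction.fixedPoints U (G ⧸ V)) ≠ 0) : Subconj U V := by
  obtain ⟨⟨q, hq⟩⟩ := (Nat.card_ne_zero.1 h).1
  obtain ⟨g, rfl⟩ := QuotientGroup.mk_surjective q
  refine ⟨ConjAct.toConjAct g, fun u hu => ?_⟩
  have h1 : u • (g : G ⧸ V) = (g : G ⧸ V) := hq ⟨u, hu⟩
  have h2 : u • (g : G ⧸ V) = ((u * g : G) : G ⧸ V) := rfl
  rw [h2, eq_comm, QuotientGroup.eq] at h1
  rw [Subgroup.mem_pointwise_smul_iff_inv_smul_mem, ConjAct.smul_def]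
  simpa [mul_assoc] using h1

theorem ghost_eq (U : Subgroup G) (x : SubgroupConjClasses G → R) :
    ghost U x = ∑ C, tau (Quotient.out C) (x C) U := by
  rw [ghost, finsum_eq_sum_of_fintype]
  refine Finset.sum_congr rfl fun C _ => ?_
  split_ifs with h
  · rfl
  · rw [tau]
    by_cases h0 : Nat.card (MulAction.fixedPoints U (G ⧸ (Quotient.out C : Subgroup G))) = 0
    · rw [h0]; simp
    · exact absurd (subconj_of_fixed h0) h

theorem ghost_mul_exists (x y : SubgroupConjClasses G → R) :
    ∃ z : SubgroupConjClasses G → R, ∀ H : Subgroup G, ghost H x * ghost H y = ghost H z := by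
  have hm : ∀ x : SubgroupConjClasses G → R,
      (∑ C, tau (Quotient.out C) (x C)) ∈ LL R G (Nat.card G + 1) := fun x =>
    AddSubgroup.sum_mem _ fun C _ =>
      tau_mem_LL _ _ (Nat.lt_succ_of_le (Subgroup.card_le_card_group _))
  obtain ⟨z, -, hz⟩ := LL_exists _ _ (LL_mul (hm x) (hm y))
  refine ⟨z, fun H => ?_⟩
  have := congrFun hz H
  simpa [ghost_eq] using this

theorem ghost_map {R' : Type*} [CommRing R'] (f : R →+* R') (H : Subgroup G)
    (x : SubgroupConjClasses G → R) : f (ghost H x) = ghost H (fun C => f (x C)) := by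
  simp [ghost_eq, tau, map_sum]

theorem Subconj.trans' {U V W : Subgroup G} (h : Subconj U V) (h' : Subconj V W) :
    Subconj U W := by
  obtain ⟨g, hg⟩ := h
  obtain ⟨k, hk⟩ := h'
  refine ⟨g * k, hg.trans ?_⟩
  rw [mul_smul]
  exact Subgroup.pointwise_smul_le_pointwise_smul_iff.2 hk

theorem Subconj.card_le' {U V : Subgroup G} (h : Subconj U V) : Nat.card U ≤ Nat.card V := by
  obtain ⟨g, hg⟩ := h
  rw [Nat.card_congr (Subgroup.equivSMul g V).toEquiv]
  exact Subgroup.card_le_of_le hg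

theorem Subconj.eq_of_card {C D : SubgroupConjClasses G}
    (h : Subconj (Quotient.out C) (Quotient.out D)) (hc : crd D ≤ crd C) : C = D := by
  obtain ⟨g, hg⟩ := h
  have e : (Quotient.out C : Subgroup G) = g • (Quotient.out D : Subgroup G) := by
    refine Subgroup.eq_of_le_of_card_ge hg ?_
    rw [← Nat.card_congr (Subgroup.equivSMul g _).toEquiv]
    exact hc
  rw [← Quotient.out_eq C, ← Quotient.out_eq D]
  exact Quotient.sound ⟨g, e.symm⟩

theorem fixed_self_ne (U V : Subgroup G) (h : U ≤ V) :
    Nat.card (MulAction.fixedPoints U (G ⧸ V)) ≠ 0 := by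
  rw [Nat.card_ne_zero]
  refine ⟨⟨⟨((1 : G) : G ⧸ V), ?_⟩⟩, inferInstance⟩
  refine (mem_fixed_iff U _).2 ?_
  rw [MulAction.stabilizer_quotient]
  exact h

def SV (C : SubgroupConjClasses G) : Set (SubgroupConjClasses G ⊕ SubgroupConjClasses G) :=
  {v | Subconj (Quotient.out C : Subgroup G) (Quotient.out (Sum.elim id id v) : Subgroup G)}

theorem ghost_term_mem (U : Subgroup G) {A : Type*} [CommRing A] (S : Subalgebra ℤ A)
    (x : SubgroupConjClasses G → A)
    (h : ∀ D, Subconj U (Quotient.out D) → x D ∈ S) (D : SubgroupConjClasses G) :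
    tau (Quotient.out D) (x D) U ∈ S := by
  rw [tau]
  by_cases h0 : Nat.card (MulAction.fixedPoints U (G ⧸ (Quotient.out D : Subgroup G))) = 0
  · rw [h0]; simp [S.zero_mem]
  · exact S.mul_mem (natCast_mem S _) (S.pow_mem (h D (subconj_of_fixed h0)) _)

theorem supp_aux (p : SubgroupConjClasses G →
      MvPolynomial (SubgroupConjClasses G ⊕ SubgroupConjClasses G) ℤ)
    (hp : ∀ H : Subgroup G, ghost H (fun C => MvPolynomial.X (Sum.inl C)) *
      ghost H (fun C => MvPolynomial.X (Sum.inr C)) = ghost H p) (n : ℕ) :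
    ∀ C, Nat.card G - crd C ≤ n → p C ∈ MvPolynomial.supported ℤ (SV C) := by
  induction n using Nat.strong_induction_on with
  | _ n ih =>
  intro C hC
  have hXl : ∀ D, Subconj (Quotient.out C : Subgroup G) (Quotient.out D) →
      (MvPolynomial.X (Sum.inl D) : MvPolynomial _ ℤ) ∈ MvPolynomial.supported ℤ (SV C) :=
    fun D hD => MvPolynomial.X_mem_supported.2 (show Sum.inl D ∈ SV C from hD)
  have hXr : ∀ D, Subconj (Quotient.out C : Subgroup G) (Quotient.out D) →
      (MvPolynomial.X (Sum.inr D) : MvPolynomial _ ℤ) ∈ MvPolynomial.supported ℤ (SV C) :=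
    fun D hD => MvPolynomial.X_mem_supported.2 (show Sum.inr D ∈ SV C from hD)
  have hmono : ∀ D, Subconj (Quotient.out C : Subgroup G) (Quotient.out D) →
      MvPolynomial.supported ℤ (SV D) ≤ MvPolynomial.supported ℤ (SV C) :=
    fun D hD => MvPolynomial.supported_mono fun v hv => Subconj.trans' hD hv
  generalize hS : MvPolynomial.supported ℤ (SV C) = S at hXl hXr hmono ⊢
  generalize hU : (Quotient.out C : Subgroup G) = U at hXl hXr hmono
  have h1 : ghost U p ∈ S := by
    rw [← hp, ghost_eq, ghost_eq]
    refine S.mul_mem (S.sum_mem fun D _ => ?_) (S.sum_mem fun D _ => ?_)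
    · exact ghost_term_mem U S (fun C => MvPolynomial.X (Sum.inl C)) hXl D
    · exact ghost_term_mem U S (fun C => MvPolynomial.X (Sum.inr C)) hXr D
  rw [ghost_eq, ← Finset.add_sum_erase _ _ (Finset.mem_univ C)] at h1
  have h2 : ∑ D ∈ Finset.univ.erase C, tau (Quotient.out D) (p D) U ∈ S := by
    refine S.sum_mem fun D hD => ?_
    have hDC := Finset.ne_of_mem_erase hD
    by_cases hs : Subconj U (Quotient.out D)
    · have hmem : p D ∈ S := by
        have hlt : crd C < crd D := by
          by_contra hle
          exact hDC (Subconj.eq_of_card (hU ▸ hs) (by omega)).symm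
        have hDG : crd D ≤ Nat.card G := Subgroup.card_le_card_group _
        have := ih (Nat.card G - crd D) (by omega) D le_rfl
        exact hmono D hs this
      rw [tau]
      exact S.mul_mem (natCast_mem S _) (S.pow_mem hmem _)
    · rw [tau]
      have h0 : Nat.card (MulAction.fixedPoints U (G ⧸ (Quotient.out D : Subgroup G))) = 0 := by
        by_contra h0
        exact hs (subconj_of_fixed h0)
      rw [h0]; simp [S.zero_mem]
  have h3 := S.sub_mem h1 h2
  have hc : Nat.card (Quotient.out C : Subgroup G) = Nat.card U := by rw [hU]
  rw [add_sub_cancel_right, tau, hc, Nat.div_self Nat.card_pos, pow_one] at h3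
  have hne := fixed_self_ne U (Quotient.out C : Subgroup G) hU.ge
  generalize Nat.card (MulAction.fixedPoints U (G ⧸ (Quotient.out C : Subgroup G))) = N at h3 hne
  have h4 : (MvPolynomial.C (N : ℤ) * p C) ∈ S := by
    simpa using h3
  rw [← hS, MvPolynomial.mem_supported] at h4 ⊢
  rwa [MvPolynomial.vars_C_mul _ (by exact_mod_cast hne)] at h4

end WittAux
/-- **Existence of the multiplication Witt polynomials.**  There is a family `p_U`,
indexed by the conjugacy classes of subgroups `U ≤ G`, of integral polynomials in
variables `a_V`, `b_V` indexed by the conjugacy classes of subgroups `V ≤ G` to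
which `U` is subconjugate (the left summand of the variable type gives the
`a`-variables, the right summand the `b`-variables), such that for every commutative
ring `R`, every subgroup `H ≤ G` and all Witt vectors `x, y ∈ W_G(R)` one has
`φ_H(x) · φ_H(y) = φ_H((p_U(x_V, y_V | U ⪯ V ≤ G))'_{U ≤ G})`. -/
theorem witt_multiplication_polynomials (G : Type u) [Group G] [Fintype G] :
    ∃ p : ∀ C : SubgroupConjClasses G,
      MvPolynomial
        ({D : SubgroupConjClasses G // Subconj (Quotient.out C) (Quotient.out D)} ⊕
         {D : SubgroupConjClasses G // Subconj (Quotient.out C) (Quotient.out D)}) ℤ,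
      ∀ (R : Type u) [CommRing R] (H : Subgroup G) (x y : SubgroupConjClasses G → R),
        ghost H x * ghost H y =
          ghost H (fun C => MvPolynomial.aeval
            (Sum.elim (fun D => x D.1) (fun D => y D.1)) (p C)) := by

  obtain ⟨p, hp⟩ := ghost_mul_exists (G := G)
    (R := MvPolynomial (SubgroupConjClasses G ⊕ SubgroupConjClasses G) ℤ)
    (fun C => MvPolynomial.X (Sum.inl C)) (fun C => MvPolynomial.X (Sum.inr C))
  have hq : ∀ C : SubgroupConjClasses G, ∃ q : MvPolynomial
        ({D : SubgroupConjClasses G // Subconj (Quotient.out C) (Quotient.out D)} ⊕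
         {D : SubgroupConjClasses G // Subconj (Quotient.out C) (Quotient.out D)}) ℤ,
      MvPolynomial.rename (Sum.map Subtype.val Subtype.val) q = p C := by
    intro C
    have h : p C ∈ MvPolynomial.supported ℤ (SV C) := supp_aux p hp _ C le_rfl
    rw [MvPolynomial.mem_supported] at h
    refine MvPolynomial.exists_rename_eq_of_vars_subset_range _ _
      (Function.Injective.sumMap Subtype.val_injective Subtype.val_injective) (h.trans ?_)
    rintro (D | D) hD
    · exact ⟨Sum.inl ⟨D, hD⟩, rfl⟩
    · exact ⟨Sum.inr ⟨D, hD⟩, rfl⟩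
  choose q hq using hq
  refine ⟨q, fun R _ H x y => ?_⟩
  have h := congrArg (MvPolynomial.aeval (R := ℤ) (Sum.elim x y)).toRingHom (hp H)
  rw [map_mul, ghost_map, ghost_map, ghost_map] at h
  simp only [AlgHom.toRingHom_eq_coe, RingHom.coe_coe, MvPolynomial.aeval_X, Sum.elim_inl,
    Sum.elim_inr] at h
  rw [h]
  congr 1
  funext C
  rw [← hq C, MvPolynomial.aeval_rename]
  congr 2
  funext v
  rcases v with v | v <;> rfl
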